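/- arXiv:2510.25576 — 2 statements merged into one kernel-verified Lean document; each statement's English description precedes it below -/
import Mathlib

section
/- Fix x₀ > 0 and L > 3x₀ and let H, θ, λ be the associated critical data. Then for every μ ∈ ℝ and every z ∈ ℝ, the functions u(s) = sin(z·θ(s)) and v(s) = cos(z·θ(s)) satisfy, for all s ∈ (0,2L): (d²/ds²)(2H(s)⁻³·ü(s)) + μ·(d/ds)(2H(s)⁻¹·u̇(s)) + (2−λ)H(s)u(s) = (2z⁴ − (2μ+2−λ)z² + (2−λ))·H(s)·sin(z·θ(s)), and the same identity with u replaced by v and sin(z·θ(s)) replaced by cos(z·θ(s)). In particular, if 2z⁴ − (2μ+2−λ)z² + (2−λ) = 0 then sin(zθ) and cos(zθ) solve the homogeneous equation (2H⁻³u'')'' + μ(2H⁻¹u')' + (2−λ)Hu = 0. -/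
open Real Set

noncomputable def sig (x0 L : ℝ) : ℝ := π * Real.sqrt (x0 / (L + x0))

noncomputable def kap (x0 L : ℝ) : ℝ := L / Real.sin (sig x0 L)

noncomputable def Hc (x0 L s : ℝ) : ℝ :=
  π / (sig x0 L * Real.sqrt (kap x0 L ^ 2 - (s - L) ^ 2))

/-- the angle function `θ(s) = (π/σ)(arcsin((s−L)/κ) + σ)` -/
noncomputable def th (x0 L s : ℝ) : ℝ :=
  π / sig x0 L * (Real.arcsin ((s - L) / kap x0 L) + sig x0 L)

/-- the fourth order operator `Lu = (2H⁻³ü)'' + μ(2H⁻¹u̇)' + (2−λ)Hu`,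
with `λ = 2L/(L+x₀)` -/
noncomputable def Lop (x0 L μ : ℝ) (u : ℝ → ℝ) (s : ℝ) : ℝ :=
  deriv (deriv fun t => 2 / Hc x0 L t ^ 3 * deriv (deriv u) t) s +
    μ * deriv (fun t => 2 / Hc x0 L t * deriv u t) s +
    (2 - 2 * L / (L + x0)) * Hc x0 L s * u s

/-!
Only three properties of `H` and `θ` matter: `H > 0`, `θ' = H`, and `(H⁻²)'' = λ - 2`. Let
`f' = g` and `g' = -ω f`. Since `H' = -½ (H⁻²)' H³`,

  `2H⁻³ (f ∘ θ)'' = -2ω H⁻¹ (f ∘ θ) - (H⁻²)' (g ∘ θ)`.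

On differentiating, the two terms in `f ∘ θ` cancel because `(H⁻²)' = 2H⁻¹ (H⁻¹)'`, which leaves
`(2 - λ - 2ω) (g ∘ θ)`. As `λ` is constant, one more derivative gives a multiple of `H (f ∘ θ)`.
The theorem is the case `ω = z²`, with `f x = sin (z x)` or `f x = cos (z x)`.
-/

open Filter Topology

theorem hasDerivAt_of_hasDerivAt_inv_sq {H : ℝ → ℝ} {p s : ℝ} (hpos : ∀ᶠ t in 𝓝 s, 0 < H t)
    (hp : HasDerivAt (fun t => (H t ^ 2)⁻¹) p s) :
    HasDerivAt H (-(p / 2) * H s ^ 3) s := by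
  have hHs : 0 < H s := hpos.self_of_nhds
  have sqrt_inv_sq : ∀ t, 0 < H t → √((H t ^ 2)⁻¹) = (H t)⁻¹ := fun t ht => by
    rw [Real.sqrt_inv, Real.sqrt_sq ht.le]
  have hsqrt : HasDerivAt (fun t => (√((H t ^ 2)⁻¹))⁻¹) (-(p / 2) * H s ^ 3) s := by
    refine ((hp.sqrt (by positivity)).fun_inv (by positivity)).congr_deriv ?_
    rw [sqrt_inv_sq s hHs]
    field_simp
  refine hsqrt.congr_of_eventuallyEq ?_
  filter_upwards [hpos] with t ht
  rw [sqrt_inv_sq t ht, inv_inv]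

/-- The operator `u ↦ (2H⁻³ü)'' + μ(2H⁻¹u̇)' + (2 - lam)Hu` for an arbitrary function `H`; `Lop` is
the instance `H = Hc x0 L`, `lam = 2L/(L + x0)`. -/
noncomputable def stabilityOp (H : ℝ → ℝ) (lam μ : ℝ) (u : ℝ → ℝ) (s : ℝ) : ℝ :=
  deriv (deriv fun t => 2 / H t ^ 3 * deriv (deriv u) t) s +
    μ * deriv (fun t => 2 / H t * deriv u t) s +
    (2 - lam) * H s * u s

/-- Critical data on an open set `U`: a positive function `H` with primitive `θ` satisfying
`2 + (H⁻²)'' = lam`. The last condition is split into differentiability of `H⁻²` and a `HasDerivAt`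
statement for its derivative, so that neither derivative is a junk value. -/
structure IsCriticalData (H θ : ℝ → ℝ) (lam : ℝ) (U : Set ℝ) : Prop where
  isOpen : IsOpen U
  pos : ∀ s ∈ U, 0 < H s
  hasDerivAt_angle : ∀ s ∈ U, HasDerivAt θ (H s) s
  differentiableAt_inv_sq : ∀ s ∈ U, DifferentiableAt ℝ (fun t => (H t ^ 2)⁻¹) s
  hasDerivAt_deriv_inv_sq : ∀ s ∈ U, HasDerivAt (deriv fun t => (H t ^ 2)⁻¹) (lam - 2) s

namespace IsCriticalData

variable {H θ f g : ℝ → ℝ} {lam ω s : ℝ} {U : Set ℝ}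

theorem hasDerivAt (h : IsCriticalData H θ lam U) (hs : s ∈ U) :
    HasDerivAt H (-(deriv (fun t => (H t ^ 2)⁻¹) s / 2) * H s ^ 3) s :=
  hasDerivAt_of_hasDerivAt_inv_sq (eventually_of_mem (h.isOpen.mem_nhds hs) h.pos)
    (h.differentiableAt_inv_sq s hs).hasDerivAt

theorem hasDerivAt_comp_angle (h : IsCriticalData H θ lam U) (hf : ∀ x, HasDerivAt f (g x) x)
    (hs : s ∈ U) : HasDerivAt (f ∘ θ) (g (θ s) * H s) s :=
  (hf (θ s)).comp s (h.hasDerivAt_angle s hs)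

theorem deriv_comp_angle (h : IsCriticalData H θ lam U) (hf : ∀ x, HasDerivAt f (g x) x) :
    EqOn (deriv (f ∘ θ)) (fun t => g (θ t) * H t) U :=
  fun _ hs => (h.hasDerivAt_comp_angle hf hs).deriv

theorem deriv_deriv_comp_angle (h : IsCriticalData H θ lam U) (hf : ∀ x, HasDerivAt f (g x) x)
    (hg : ∀ x, HasDerivAt g (-ω * f x) x) :
    EqOn (deriv (deriv (f ∘ θ)))
      (fun t => -ω * f (θ t) * H t ^ 2
        - deriv (fun r => (H r ^ 2)⁻¹) t / 2 * H t ^ 3 * g (θ t)) U := by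
  intro s hs
  rw [(h.deriv_comp_angle hf).deriv h.isOpen hs]
  refine ((h.hasDerivAt_comp_angle hg hs).mul (h.hasDerivAt hs)).deriv.trans ?_
  simp only [Function.comp_apply]
  ring

theorem deriv_two_div_mul_deriv_comp_angle (h : IsCriticalData H θ lam U)
    (hf : ∀ x, HasDerivAt f (g x) x) (hg : ∀ x, HasDerivAt g (-ω * f x) x) (hs : s ∈ U) :
    deriv (fun t => 2 / H t * deriv (f ∘ θ) t) s = -2 * ω * H s * f (θ s) := by
  have hflux : EqOn (fun t => 2 / H t * deriv (f ∘ θ) t) (fun t => 2 * (g ∘ θ) t) U := by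
    intro t ht
    have hne := (h.pos t ht).ne'
    simp only [h.deriv_comp_angle hf ht, Function.comp_apply]
    field_simp
  rw [hflux.deriv h.isOpen hs, ((h.hasDerivAt_comp_angle hg hs).const_mul 2).deriv]
  ring

theorem two_div_cube_mul_deriv_deriv_comp_angle (h : IsCriticalData H θ lam U)
    (hf : ∀ x, HasDerivAt f (g x) x) (hg : ∀ x, HasDerivAt g (-ω * f x) x) :
    EqOn (fun t => 2 / H t ^ 3 * deriv (deriv (f ∘ θ)) t)
      (fun t => -2 * ω * ((H t)⁻¹ * (f ∘ θ) t)
        - deriv (fun r => (H r ^ 2)⁻¹) t * (g ∘ θ) t) U := by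
  intro t ht
  have hne := (h.pos t ht).ne'
  simp only [h.deriv_deriv_comp_angle hf hg ht, Function.comp_apply]
  field_simp

theorem deriv_two_div_cube_mul_deriv_deriv_comp_angle (h : IsCriticalData H θ lam U)
    (hf : ∀ x, HasDerivAt f (g x) x) (hg : ∀ x, HasDerivAt g (-ω * f x) x) :
    EqOn (deriv fun t => 2 / H t ^ 3 * deriv (deriv (f ∘ θ)) t)
      (fun t => (2 - lam - 2 * ω) * (g ∘ θ) t) U := by
  intro s hs
  have hne := (h.pos s hs).ne'
  have hfirst := (((h.hasDerivAt hs).fun_inv hne).mul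
    (h.hasDerivAt_comp_angle hf hs)).const_mul (-2 * ω)
  have hsecond := (h.hasDerivAt_deriv_inv_sq s hs).mul (h.hasDerivAt_comp_angle hg hs)
  rw [(h.two_div_cube_mul_deriv_deriv_comp_angle hf hg).deriv h.isOpen hs]
  refine (hfirst.sub hsecond).deriv.trans ?_
  simp only [Function.comp_apply]
  field_simp
  ring

theorem stabilityOp_comp_angle (h : IsCriticalData H θ lam U) (hf : ∀ x, HasDerivAt f (g x) x)
    (hg : ∀ x, HasDerivAt g (-ω * f x) x) (μ : ℝ) (hs : s ∈ U) :
    stabilityOp H lam μ (f ∘ θ) s =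
      (2 * ω ^ 2 - (2 * μ + 2 - lam) * ω + (2 - lam)) * H s * f (θ s) := by
  have hfourth : deriv (deriv fun t => 2 / H t ^ 3 * deriv (deriv (f ∘ θ)) t) s =
      (2 - lam - 2 * ω) * (-ω * f (θ s) * H s) := by
    rw [(h.deriv_two_div_cube_mul_deriv_deriv_comp_angle hf hg).deriv h.isOpen hs,
      ((h.hasDerivAt_comp_angle hg hs).const_mul _).deriv]
  rw [stabilityOp, hfourth, h.deriv_two_div_mul_deriv_comp_angle hf hg hs, Function.comp_apply]
  ring

theorem stabilityOp_sin_mul_angle (h : IsCriticalData H θ lam U) (μ z : ℝ) (hs : s ∈ U) :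
    stabilityOp H lam μ (fun r => Real.sin (z * θ r)) s =
      (2 * z ^ 4 - (2 * μ + 2 - lam) * z ^ 2 + (2 - lam)) * H s * Real.sin (z * θ s) := by
  have hsin (x : ℝ) : HasDerivAt (fun y => Real.sin (z * y)) (z * Real.cos (z * x)) x :=
    ((hasDerivAt_id x).const_mul z).sin.congr_deriv (by simp only [id]; ring)
  have hcos (x : ℝ) :
      HasDerivAt (fun y => z * Real.cos (z * y)) (-z ^ 2 * Real.sin (z * x)) x :=
    (((hasDerivAt_id x).const_mul z).cos.const_mul z).congr_deriv (by simp only [id]; ring)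
  refine (h.stabilityOp_comp_angle hsin hcos μ hs).trans ?_
  ring

theorem stabilityOp_cos_mul_angle (h : IsCriticalData H θ lam U) (μ z : ℝ) (hs : s ∈ U) :
    stabilityOp H lam μ (fun r => Real.cos (z * θ r)) s =
      (2 * z ^ 4 - (2 * μ + 2 - lam) * z ^ 2 + (2 - lam)) * H s * Real.cos (z * θ s) := by
  have hcos (x : ℝ) : HasDerivAt (fun y => Real.cos (z * y)) (-z * Real.sin (z * x)) x :=
    ((hasDerivAt_id x).const_mul z).cos.congr_deriv (by simp only [id]; ring)
  have hsin (x : ℝ) :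
      HasDerivAt (fun y => -z * Real.sin (z * y)) (-z ^ 2 * Real.cos (z * x)) x :=
    (((hasDerivAt_id x).const_mul z).sin.const_mul (-z)).congr_deriv (by simp only [id]; ring)
  refine (h.stabilityOp_comp_angle hcos hsin μ hs).trans ?_
  ring

end IsCriticalData

theorem hasDerivAt_arcsin_sub_div {κ a s : ℝ} (hκ : 0 < κ) (hs : 0 < κ ^ 2 - (s - a) ^ 2) :
    HasDerivAt (fun t => Real.arcsin ((t - a) / κ)) (1 / √(κ ^ 2 - (s - a) ^ 2)) s := by
  have habs : |(s - a) / κ| < 1 := by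
    rw [← sq_lt_one_iff_abs_lt_one, div_pow, div_lt_one (by positivity)]
    linarith
  obtain ⟨hgt, hlt⟩ := abs_lt.mp habs
  have hsqrt : √(1 - ((s - a) / κ) ^ 2) = √(κ ^ 2 - (s - a) ^ 2) / κ := by
    rw [show 1 - ((s - a) / κ) ^ 2 = (κ ^ 2 - (s - a) ^ 2) / κ ^ 2 by field_simp,
      Real.sqrt_div hs.le, Real.sqrt_sq hκ.le]
  have hinner : HasDerivAt (fun t => (t - a) / κ) (1 / κ) s :=
    ((hasDerivAt_id s).sub_const a).div_const κ
  refine ((Real.hasDerivAt_arcsin hgt.ne' hlt.ne).comp s hinner).congr_deriv ?_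
  rw [hsqrt]
  field_simp

section CriticalData

variable {x0 L s : ℝ}

theorem sig_pos (hx0 : 0 < x0) (hL : 0 < L) : 0 < sig x0 L := by
  unfold sig
  positivity

theorem sig_lt_pi (hx0 : 0 < x0) (hL : 0 < L) : sig x0 L < π := by
  have hratio : x0 / (L + x0) < 1 := (div_lt_one (by positivity)).mpr (by linarith)
  exact mul_lt_of_lt_one_right Real.pi_pos (by rwa [Real.sqrt_lt' one_pos, one_pow])

theorem sig_sq (hx0 : 0 < x0) (hL : 0 < L) : sig x0 L ^ 2 = π ^ 2 * (x0 / (L + x0)) := by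
  rw [sig, mul_pow, Real.sq_sqrt (by positivity)]

theorem le_kap (hx0 : 0 < x0) (hL : 0 < L) : L ≤ kap x0 L :=
  le_div_self hL.le (Real.sin_pos_of_pos_of_lt_pi (sig_pos hx0 hL) (sig_lt_pi hx0 hL))
    (Real.sin_le_one _)

theorem pos_of_mem_Ioo_two_mul (hs : s ∈ Ioo 0 (2 * L)) : 0 < L := by
  linarith [hs.1, hs.2]

theorem kap_sq_sub_sq_pos (hx0 : 0 < x0) (hs : s ∈ Ioo 0 (2 * L)) :
    0 < kap x0 L ^ 2 - (s - L) ^ 2 := by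
  obtain ⟨hs0, hs2L⟩ := hs
  have hκ : L ≤ kap x0 L := le_kap hx0 (pos_of_mem_Ioo_two_mul ⟨hs0, hs2L⟩)
  exact sub_pos.mpr (sq_lt_sq' (by linarith) (by linarith))

theorem Hc_pos (hx0 : 0 < x0) (hs : s ∈ Ioo 0 (2 * L)) : 0 < Hc x0 L s :=
  div_pos Real.pi_pos <| mul_pos (sig_pos hx0 (pos_of_mem_Ioo_two_mul hs)) <|
    Real.sqrt_pos.mpr (kap_sq_sub_sq_pos hx0 hs)

theorem hasDerivAt_th (hx0 : 0 < x0) (hs : s ∈ Ioo 0 (2 * L)) :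
    HasDerivAt (th x0 L) (Hc x0 L s) s := by
  have hL : 0 < L := pos_of_mem_Ioo_two_mul hs
  have hκ : 0 < kap x0 L := hL.trans_le (le_kap hx0 hL)
  refine (((hasDerivAt_arcsin_sub_div hκ (kap_sq_sub_sq_pos hx0 hs)).add_const
    (sig x0 L)).const_mul (π / sig x0 L)).congr_deriv ?_
  rw [Hc, div_mul_div_comm, mul_one]

theorem inv_Hc_sq (hx0 : 0 < x0) :
    EqOn (fun t => (Hc x0 L t ^ 2)⁻¹)
      (fun t => x0 / (L + x0) * (kap x0 L ^ 2 - (t - L) ^ 2)) (Ioo 0 (2 * L)) := by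
  intro t ht
  have hL : 0 < L := pos_of_mem_Ioo_two_mul ht
  simp only [Hc]
  rw [div_pow, mul_pow, Real.sq_sqrt (kap_sq_sub_sq_pos hx0 ht).le, sig_sq hx0 hL]
  field_simp

theorem hasDerivAt_inv_Hc_sq (hx0 : 0 < x0) (hs : s ∈ Ioo 0 (2 * L)) :
    HasDerivAt (fun t => (Hc x0 L t ^ 2)⁻¹) (-2 * (x0 / (L + x0)) * (s - L)) s := by
  have hquad : HasDerivAt (fun t => x0 / (L + x0) * (kap x0 L ^ 2 - (t - L) ^ 2))
      (-2 * (x0 / (L + x0)) * (s - L)) s :=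
    (((((hasDerivAt_id s).sub_const L).fun_pow 2).const_sub _).const_mul _).congr_deriv
      (by simp only [id]; push_cast; ring)
  exact hquad.congr_of_eventuallyEq
    ((inv_Hc_sq hx0).eventuallyEq_of_mem (isOpen_Ioo.mem_nhds hs))

theorem hasDerivAt_deriv_inv_Hc_sq (hx0 : 0 < x0) (hs : s ∈ Ioo 0 (2 * L)) :
    HasDerivAt (deriv fun t => (Hc x0 L t ^ 2)⁻¹) (2 * L / (L + x0) - 2) s := by
  have hL : 0 < L := pos_of_mem_Ioo_two_mul hs
  have hlinear : HasDerivAt (fun t => -2 * (x0 / (L + x0)) * (t - L))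
      (2 * L / (L + x0) - 2) s :=
    (((hasDerivAt_id s).sub_const L).const_mul _).congr_deriv (by field_simp; ring)
  refine hlinear.congr_of_eventuallyEq ?_
  filter_upwards [isOpen_Ioo.mem_nhds hs] with t ht
  exact (hasDerivAt_inv_Hc_sq hx0 ht).deriv

theorem isCriticalData_Hc_th (hx0 : 0 < x0) :
    IsCriticalData (Hc x0 L) (th x0 L) (2 * L / (L + x0)) (Ioo 0 (2 * L)) where
  isOpen := isOpen_Ioo
  pos _ := Hc_pos hx0
  hasDerivAt_angle _ := hasDerivAt_th hx0
  differentiableAt_inv_sq _ hs := (hasDerivAt_inv_Hc_sq hx0 hs).differentiableAt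
  hasDerivAt_deriv_inv_sq _ := hasDerivAt_deriv_inv_Hc_sq hx0

end CriticalData

theorem statement13_general (x0 L μ z : ℝ) (hx0 : 0 < x0) :
    (∀ s ∈ Set.Ioo (0:ℝ) (2 * L),
        Lop x0 L μ (fun r => Real.sin (z * th x0 L r)) s =
          (2 * z ^ 4 - (2 * μ + 2 - 2 * L / (L + x0)) * z ^ 2 + (2 - 2 * L / (L + x0))) *
            Hc x0 L s * Real.sin (z * th x0 L s)) ∧
    (∀ s ∈ Set.Ioo (0:ℝ) (2 * L),
        Lop x0 L μ (fun r => Real.cos (z * th x0 L r)) s =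
          (2 * z ^ 4 - (2 * μ + 2 - 2 * L / (L + x0)) * z ^ 2 + (2 - 2 * L / (L + x0))) *
            Hc x0 L s * Real.cos (z * th x0 L s)) ∧
    (2 * z ^ 4 - (2 * μ + 2 - 2 * L / (L + x0)) * z ^ 2 + (2 - 2 * L / (L + x0)) = 0 →
      (∀ s ∈ Set.Ioo (0:ℝ) (2 * L),
          Lop x0 L μ (fun r => Real.sin (z * th x0 L r)) s = 0) ∧
      (∀ s ∈ Set.Ioo (0:ℝ) (2 * L),
          Lop x0 L μ (fun r => Real.cos (z * th x0 L r)) s = 0)) := by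
  have hdata := isCriticalData_Hc_th (L := L) hx0
  have hsin (s : ℝ) (hs : s ∈ Ioo 0 (2 * L)) := hdata.stabilityOp_sin_mul_angle μ z hs
  have hcos (s : ℝ) (hs : s ∈ Ioo 0 (2 * L)) := hdata.stabilityOp_cos_mul_angle μ z hs
  refine ⟨hsin, hcos, fun hz => ⟨fun s hs => ?_, fun s hs => ?_⟩⟩
  · exact (hsin s hs).trans (by rw [hz, zero_mul, zero_mul])
  · exact (hcos s hs).trans (by rw [hz, zero_mul, zero_mul])

/-- action of the stability operator on `sin(zθ)` and `cos(zθ)`. -/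
theorem statement13 (x0 L μ z : ℝ) (hx0 : 0 < x0) (hL : 3 * x0 < L) :
    (∀ s ∈ Set.Ioo (0:ℝ) (2 * L),
        Lop x0 L μ (fun r => Real.sin (z * th x0 L r)) s =
          (2 * z ^ 4 - (2 * μ + 2 - 2 * L / (L + x0)) * z ^ 2 + (2 - 2 * L / (L + x0))) *
            Hc x0 L s * Real.sin (z * th x0 L s)) ∧
    (∀ s ∈ Set.Ioo (0:ℝ) (2 * L),
        Lop x0 L μ (fun r => Real.cos (z * th x0 L r)) s =
          (2 * z ^ 4 - (2 * μ + 2 - 2 * L / (L + x0)) * z ^ 2 + (2 - 2 * L / (L + x0))) *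
            Hc x0 L s * Real.cos (z * th x0 L s)) ∧
    (2 * z ^ 4 - (2 * μ + 2 - 2 * L / (L + x0)) * z ^ 2 + (2 - 2 * L / (L + x0)) = 0 →
      (∀ s ∈ Set.Ioo (0:ℝ) (2 * L),
          Lop x0 L μ (fun r => Real.sin (z * th x0 L r)) s = 0) ∧
      (∀ s ∈ Set.Ioo (0:ℝ) (2 * L),
          Lop x0 L μ (fun r => Real.cos (z * th x0 L r)) s = 0)) :=
  statement13_general x0 L μ z hx0
end

section
/- Fix x₀ > 0 and L > 3x₀ and let H, λ be the associated critical data. Suppose μ > 0 and u ∈ C⁴([0,2L], ℝ) is not identically zero and satisfies the boundary value problem: (d²/ds²)(2H(s)⁻³·ü(s)) + μ·(d/ds)(2H(s)⁻¹·u̇(s)) + (2−λ)H(s)u(s) = 0 on (0,2L), u(0) = u(2L) = 0, and u̇(0) = u̇(2L) = 0. Then μ > 1. -/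
open Real Set

/-!
Let `y = H⁻¹`, let the angle `θ` be given by `dθ = ds / y`, and write `D = y d/ds = d/dθ`. Pairing
the equation with `u` gives `∫ y³ü² - μ y u̇² + e² u² / y ds = 0`, where `λ = 2 - 2e²`. As
`(y ẏ)˙ = -e²`, integrating the derivative of `y ẏ · y u̇²` turns `∫ y³ü² ds` into
`∫ (D²u)² - e² (Du)² dθ`, so in the angle the form has constant coefficients and splits as
`e² ∫ (v'' + v)² + (1 - e²) (∫ v''² - ∫ v'²) + (1 - μ) ∫ v'² = 0`.
The angle runs over an interval of length at most `2π`, and `v'` has mean zero and equal boundary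
values, so Wirtinger's inequality makes the middle term nonnegative. If `μ ≤ 1`, then `v'' = -v`
with `v` and `v'` vanishing at an endpoint, whence `v = 0`.
-/

section Wirtinger

open MeasureTheory

variable {a b : ℝ} {f f' : ℝ → ℂ}

theorem norm_fourierCoeffOn_le_of_hasDerivAt (hab : a < b) {n : ℤ} (hn : n ≠ 0)
    (hf : ∀ x ∈ Icc a b, HasDerivAt f (f' x) x) (hf' : IntervalIntegrable f' volume a b)
    (hfab : f a = f b) :
    ‖fourierCoeffOn hab f n‖ ≤ (b - a) / (2 * π) * ‖fourierCoeffOn hab f' n‖ := by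
  have hn' : (1 : ℝ) ≤ |(n : ℝ)| := mod_cast Int.one_le_abs hn
  have hlen : 0 < b - a := sub_pos.2 hab
  have hcoeff : ‖fourierCoeffOn hab f n‖ =
      (b - a) / (2 * π * |(n : ℝ)|) * ‖fourierCoeffOn hab f' n‖ := by
    rw [fourierCoeffOn_of_hasDerivAt hab hn (by rwa [uIcc_of_le hab.le]) hf', hfab, sub_self,
      mul_zero, zero_sub, ← Complex.ofReal_sub]
    simp only [norm_mul, norm_neg, norm_div, norm_one, Complex.norm_real, Complex.norm_I,
      Complex.norm_ofNat, Complex.norm_intCast, norm_eq_abs, abs_of_pos pi_pos, abs_of_pos hlen]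
    ring
  rw [hcoeff]
  gcongr (b - a) / ?_ * _
  exact le_mul_of_one_le_right (by positivity) hn'

theorem fourierCoeffOn_zero_eq_zero (hab : a < b) (hf : ∫ x in a..b, f x = 0) :
    fourierCoeffOn hab f 0 = 0 := by
  simp only [fourierCoeffOn_eq_integral, neg_zero, fourier_zero, one_smul, hf, smul_zero]

theorem memLp_restrict_Ioc_of_continuousOn {E : Type*} [NormedAddCommGroup E] {g : ℝ → E}
    (p : ENNReal) (hg : ContinuousOn g (Icc a b)) : MemLp g p (volume.restrict (Ioc a b)) := by
  obtain ⟨C, hC⟩ := isCompact_Icc.exists_bound_of_continuousOn hg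
  refine .of_bound ((hg.mono Ioc_subset_Icc_self).aestronglyMeasurable measurableSet_Ioc) C ?_
  filter_upwards [ae_restrict_mem measurableSet_Ioc] with x hx
  exact hC x (Ioc_subset_Icc_self hx)

theorem wirtinger_inequality (hab : a < b) (hf : ∀ x ∈ Icc a b, HasDerivAt f (f' x) x)
    (hf' : ContinuousOn f' (Icc a b)) (hfab : f a = f b) (hmean : ∫ x in a..b, f x = 0) :
    ∫ x in a..b, ‖f x‖ ^ 2 ≤ ((b - a) / (2 * π)) ^ 2 * ∫ x in a..b, ‖f' x‖ ^ 2 := by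
  have hlen : 0 < b - a := sub_pos.2 hab
  have parseval := hasSum_sq_fourierCoeffOn hab
    (memLp_restrict_Ioc_of_continuousOn 2 fun x hx ↦ (hf x hx).continuousAt.continuousWithinAt)
  have parseval' := (hasSum_sq_fourierCoeffOn hab
    (memLp_restrict_Ioc_of_continuousOn 2 hf')).mul_left (((b - a) / (2 * π)) ^ 2)
  have hcoeff (n : ℤ) : ‖fourierCoeffOn hab f n‖ ^ 2 ≤
      ((b - a) / (2 * π)) ^ 2 * ‖fourierCoeffOn hab f' n‖ ^ 2 := by
    obtain rfl | hn := eq_or_ne n 0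
    · rw [fourierCoeffOn_zero_eq_zero hab hmean, norm_zero, zero_pow two_ne_zero]
      positivity
    · rw [← mul_pow]
      gcongr
      exact norm_fourierCoeffOn_le_of_hasDerivAt hab hn hf
        (hf'.intervalIntegrable_of_Icc hab.le) hfab
  have hsum := hasSum_le hcoeff parseval parseval'
  rw [smul_eq_mul, smul_eq_mul, mul_left_comm] at hsum
  exact le_of_mul_le_mul_left hsum (inv_pos.2 hlen)

theorem wirtinger_inequality_real {w w' : ℝ → ℝ} (hab : a < b)
    (hw : ∀ x ∈ Icc a b, HasDerivAt w (w' x) x) (hw' : ContinuousOn w' (Icc a b))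
    (hwab : w a = w b) (hmean : ∫ x in a..b, w x = 0) :
    ∫ x in a..b, w x ^ 2 ≤ ((b - a) / (2 * π)) ^ 2 * ∫ x in a..b, w' x ^ 2 := by
  have hmean' : ∫ x in a..b, (w x : ℂ) = 0 := by
    rw [intervalIntegral.integral_ofReal, hmean, Complex.ofReal_zero]
  simpa only [Complex.norm_real, norm_eq_abs, sq_abs] using
    wirtinger_inequality hab (fun x hx ↦ (hw x hx).ofReal_comp)
      (Complex.continuous_ofReal.comp_continuousOn hw') (congrArg _ hwab) hmean'

end Wirtinger

section ClampedRigidity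

open intervalIntegral

variable {a b : ℝ} {v v' v'' : ℝ → ℝ}

theorem integral_add_sq_of_hasDerivAt (hab : a ≤ b) (hv : ∀ x ∈ Icc a b, HasDerivAt v (v' x) x)
    (hv' : ∀ x ∈ Icc a b, HasDerivAt v' (v'' x) x) (hv'' : ContinuousOn v'' (Icc a b))
    (ha : v a = 0) (hb : v b = 0) :
    ∫ x in a..b, (v'' x + v x) ^ 2 =
      (∫ x in a..b, v'' x ^ 2) - 2 * (∫ x in a..b, v' x ^ 2) + ∫ x in a..b, v x ^ 2 := by
  have cv : ContinuousOn v (Icc a b) := HasDerivAt.continuousOn hv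
  have cv' : ContinuousOn v' (Icc a b) := HasDerivAt.continuousOn hv'
  have hparts : ∫ x in a..b, v x * v'' x = -∫ x in a..b, v' x ^ 2 := by
    rw [← uIcc_of_le hab] at hv hv' hv'' cv'
    rw [integral_mul_deriv_eq_deriv_mul hv hv' cv'.intervalIntegrable hv''.intervalIntegrable,
      ha, hb]
    simp only [zero_mul, sub_zero, zero_sub, sq]
  calc ∫ x in a..b, (v'' x + v x) ^ 2
      = ∫ x in a..b, (v'' x ^ 2 + 2 * (v x * v'' x) + v x ^ 2) := by
        congr 1; ext x; ring
    _ = (∫ x in a..b, v'' x ^ 2) + 2 * (∫ x in a..b, v x * v'' x) + ∫ x in a..b, v x ^ 2 := by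
        rw [integral_add, integral_add, integral_const_mul] <;>
          exact ContinuousOn.intervalIntegrable_of_Icc hab (by fun_prop)
    _ = _ := by rw [hparts]; ring

theorem eq_zero_of_hasDerivAt_neg (hv : ∀ x ∈ Icc a b, HasDerivAt v (v' x) x)
    (hv' : ∀ x ∈ Icc a b, HasDerivAt v' (-v x) x) (ha : v a = 0) (ha' : v' a = 0) :
    ∀ x ∈ Icc a b, v x = 0 := by
  have hderiv : ∀ x ∈ Icc a b, HasDerivAt (fun x ↦ v x ^ 2 + v' x ^ 2) 0 x := fun x hx ↦
    (((hv x hx).fun_pow 2).add ((hv' x hx).fun_pow 2)).congr_deriv (by ring)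
  intro x hx
  have hconst := constant_of_has_deriv_right_zero (HasDerivAt.continuousOn hderiv)
    (fun x hx ↦ (hderiv x (Ico_subset_Icc_self hx)).hasDerivWithinAt) x hx
  simp only [ha, ha'] at hconst
  nlinarith [sq_nonneg (v x), sq_nonneg (v' x)]

theorem eq_zero_of_integral_sq_eq_zero {f : ℝ → ℝ} (hab : a < b) (hf : ContinuousOn f (Icc a b))
    (hint : ∫ x in a..b, f x ^ 2 = 0) : ∀ x ∈ Icc a b, f x = 0 := by
  by_contra! ⟨c, hc, hfc⟩
  have hpos := integral_pos hab (hf.pow 2) (fun x _ ↦ sq_nonneg (f x))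
    ⟨c, hc, sq_pos_of_ne_zero hfc⟩
  exact hpos.ne' hint

theorem eq_zero_of_integral_clamped_form_eq_zero {e μ : ℝ} (hab : a < b) (hlen : b - a ≤ 2 * π)
    (hv : ∀ x ∈ Icc a b, HasDerivAt v (v' x) x) (hv' : ∀ x ∈ Icc a b, HasDerivAt v' (v'' x) x)
    (hv'' : ContinuousOn v'' (Icc a b)) (he : 0 < e) (he1 : e ≤ 1) (hμ : μ ≤ 1)
    (ha : v a = 0) (hb : v b = 0) (ha' : v' a = 0) (hb' : v' b = 0)
    (hform : ∫ x in a..b, (v'' x ^ 2 - (μ + e ^ 2) * v' x ^ 2 + e ^ 2 * v x ^ 2) = 0) :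
    ∀ x ∈ Icc a b, v x = 0 := by
  have cv : ContinuousOn v (Icc a b) := HasDerivAt.continuousOn hv
  have cv' : ContinuousOn v' (Icc a b) := HasDerivAt.continuousOn hv'
  have hmean : ∫ x in a..b, v' x = 0 := by
    rw [integral_eq_sub_of_hasDerivAt (by rwa [uIcc_of_le hab.le])
      (cv'.intervalIntegrable_of_Icc hab.le), ha, hb, sub_zero]
  have hnonneg (f : ℝ → ℝ) : 0 ≤ ∫ x in a..b, f x ^ 2 :=
    integral_nonneg hab.le fun x _ ↦ sq_nonneg (f x)
  have hwirtinger : ∫ x in a..b, v' x ^ 2 ≤ ∫ x in a..b, v'' x ^ 2 := by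
    have hratio : ((b - a) / (2 * π)) ^ 2 ≤ 1 :=
      pow_le_one₀ (div_nonneg (sub_nonneg.2 hab.le) two_pi_pos.le) ((div_le_one two_pi_pos).2 hlen)
    exact (wirtinger_inequality_real hab hv' hv'' (ha'.trans hb'.symm) hmean).trans
      (mul_le_of_le_one_left (hnonneg v'') hratio)
  have hsplit : ∫ x in a..b, (v'' x ^ 2 - (μ + e ^ 2) * v' x ^ 2 + e ^ 2 * v x ^ 2) =
      e ^ 2 * (∫ x in a..b, (v'' x + v x) ^ 2)
        + (1 - e ^ 2) * ((∫ x in a..b, v'' x ^ 2) - ∫ x in a..b, v' x ^ 2)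
        + (1 - μ) * ∫ x in a..b, v' x ^ 2 := by
    rw [integral_add_sq_of_hasDerivAt hab.le hv hv' hv'' ha hb, integral_add, integral_sub,
      integral_const_mul, integral_const_mul]
    · ring
    all_goals exact ContinuousOn.intervalIntegrable_of_Icc hab.le (by fun_prop)
  have hzero : ∫ x in a..b, (v'' x + v x) ^ 2 = 0 := by
    refine le_antisymm (nonpos_of_mul_nonpos_right ?_ (pow_pos he 2)) (hnonneg _)
    have hgap := mul_nonneg (sub_nonneg.2 (pow_le_one₀ he.le he1 : e ^ 2 ≤ 1))
      (sub_nonneg.2 hwirtinger)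
    have hslack := mul_nonneg (sub_nonneg.2 hμ) (hnonneg v')
    linarith
  have hode := eq_zero_of_integral_sq_eq_zero hab (hv''.add cv) hzero
  exact eq_zero_of_hasDerivAt_neg hv
    (fun x hx ↦ (hv' x hx).congr_deriv (eq_neg_of_add_eq_zero_left (hode x hx))) ha ha'

end ClampedRigidity

section Energy

open intervalIntegral

variable {a b : ℝ} {u : ℝ → ℝ}

theorem hasDerivAt_boundary_flux {p q : ℝ → ℝ} {s : ℝ} (hp : ContDiffAt ℝ 2 p s)
    (hq : DifferentiableAt ℝ q s) (hu : ContDiff ℝ 4 u) :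
    HasDerivAt (fun t ↦ deriv (fun x ↦ p x * deriv (deriv u) x) t * u t
        - p t * deriv (deriv u) t * deriv u t + q t * deriv u t * u t)
      ((deriv (deriv fun t ↦ p t * deriv (deriv u) t) s + deriv (fun t ↦ q t * deriv u t) s) * u s
        - p s * deriv (deriv u) s ^ 2 + q s * deriv u s ^ 2) s := by
  have cu' : ContDiff ℝ 3 (deriv u) := hu.deriv'
  have cu'' : ContDiff ℝ 2 (deriv (deriv u)) := cu'.deriv'
  have du : HasDerivAt u (deriv u s) s := (hu.differentiable (by simp) s).hasDerivAt
  have du' : DifferentiableAt ℝ (deriv u) s := cu'.differentiable (by simp) s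
  have cF : ContDiffAt ℝ 2 (fun t ↦ p t * deriv (deriv u) t) s := hp.mul cu''.contDiffAt
  have dF := (cF.differentiableAt (by simp)).hasDerivAt
  have dF' := ((cF.derivWithin (m := 1) (by norm_num)).differentiableAt (by simp)).hasDerivAt
  have dG := (hq.fun_mul du').hasDerivAt
  exact (((dF'.mul du).sub (dF.mul du'.hasDerivAt)).add (dG.mul du)).congr_deriv (by ring)

theorem integral_eq_zero_of_clamped_solution {p q r : ℝ → ℝ} (hab : a ≤ b)
    (hp : ∀ s ∈ Icc a b, ContDiffAt ℝ 2 p s) (hq : ∀ s ∈ Icc a b, DifferentiableAt ℝ q s)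
    (hr : ContinuousOn r (Icc a b)) (hu : ContDiff ℝ 4 u)
    (hode : ∀ s ∈ Ioo a b, deriv (deriv fun t ↦ p t * deriv (deriv u) t) s
      + deriv (fun t ↦ q t * deriv u t) s + r s * u s = 0)
    (ha : u a = 0) (hb : u b = 0) (ha' : deriv u a = 0) (hb' : deriv u b = 0) :
    ∫ s in a..b, (p s * deriv (deriv u) s ^ 2 - q s * deriv u s ^ 2 + r s * u s ^ 2) = 0 := by
  have dflux := fun s hs ↦ hasDerivAt_boundary_flux (hp s hs) (hq s hs) hu
  have cp : ContinuousOn p (Icc a b) := fun s hs ↦ (hp s hs).continuousAt.continuousWithinAt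
  have cq : ContinuousOn q (Icc a b) := fun s hs ↦ (hq s hs).continuousAt.continuousWithinAt
  have cu : Continuous u := hu.continuous
  have cu' : Continuous (deriv u) := (hu.of_le (by norm_num)).continuous_deriv_one
  have cu'' : Continuous (deriv (deriv u)) :=
    ContDiff.continuous_deriv_one (hu.of_le (by norm_num : (2 : WithTop ℕ∞) ≤ 4)).deriv'
  have hint := integral_eq_sub_of_hasDerivAt_of_le hab (HasDerivAt.continuousOn dflux)
    (f' := fun s ↦ -(p s * deriv (deriv u) s ^ 2 - q s * deriv u s ^ 2 + r s * u s ^ 2))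
    (fun s hs ↦ (dflux s (Ioo_subset_Icc_self hs)).congr_deriv
      (by linear_combination u s * hode s hs))
    (ContinuousOn.intervalIntegrable_of_Icc hab (by fun_prop))
  simp only [ha, hb, ha', hb', mul_zero, sub_zero, add_zero] at hint
  exact neg_eq_zero.1 (integral_neg.symm.trans hint)

/-- The derivative `y · du/ds` of `u` with respect to the angle `θ` given by `dθ = ds / y`. -/
noncomputable def angleDeriv (y u : ℝ → ℝ) (s : ℝ) : ℝ := y s * deriv u s

/-- The properties of the reciprocal `y = H⁻¹` of the critical curvature: it is positive and `C²`
on `[a, b]`, and `(y²)'' = -2e²`, which is the equation `2 + (H⁻²)'' = λ` for `λ = 2 - 2e²`. -/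
structure IsCriticalProfile (e a b : ℝ) (y : ℝ → ℝ) : Prop where
  contDiffAt : ∀ s ∈ Icc a b, ContDiffAt ℝ 2 y s
  pos : ∀ s ∈ Icc a b, 0 < y s
  hasDerivAt_mul_deriv : ∀ s ∈ Icc a b, HasDerivAt (fun t ↦ y t * deriv y t) (-e ^ 2) s

variable {y : ℝ → ℝ} {e μ : ℝ}

theorem hasDerivAt_angleDeriv {s : ℝ} (hy : DifferentiableAt ℝ y s) (hu : ContDiff ℝ 2 u) :
    HasDerivAt (angleDeriv y u) (deriv y s * deriv u s + y s * deriv (deriv u) s) s := by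
  have cu' : ContDiff ℝ 1 (deriv u) := hu.deriv'
  exact hy.hasDerivAt.mul (cu'.differentiable (by simp) s).hasDerivAt

theorem continuousOn_angleDeriv (hy : ContinuousOn y (Icc a b)) (hu : ContDiff ℝ 1 u) :
    ContinuousOn (angleDeriv y u) (Icc a b) :=
  hy.mul hu.continuous_deriv_one.continuousOn

theorem continuousOn_deriv_of_contDiffAt (hy : ∀ s ∈ Icc a b, ContDiffAt ℝ 1 y s) :
    ContinuousOn (deriv y) (Icc a b) := fun s hs ↦
  ((hy s hs).derivWithin (m := 0) (by norm_num)).continuousAt.continuousWithinAt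

theorem continuousOn_angleDeriv_angleDeriv (hy : ∀ s ∈ Icc a b, ContDiffAt ℝ 1 y s)
    (hu : ContDiff ℝ 2 u) : ContinuousOn (angleDeriv y (angleDeriv y u)) (Icc a b) := by
  have cy : ContinuousOn y (Icc a b) := fun s hs ↦ (hy s hs).continuousAt.continuousWithinAt
  have cy' : ContinuousOn (deriv y) (Icc a b) := continuousOn_deriv_of_contDiffAt hy
  have cu' : ContDiff ℝ 1 (deriv u) := hu.deriv'
  have cont_u' : Continuous (deriv u) := cu'.continuous
  refine ContinuousOn.congr (f := fun s ↦ y s * (deriv y s * deriv u s + y s * deriv (deriv u) s))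
    (by fun_prop) fun s hs ↦ ?_
  rw [angleDeriv, (hasDerivAt_angleDeriv ((hy s hs).differentiableAt (by simp)) hu).deriv]

theorem hasDerivAt_mul_deriv_mul_sq {s : ℝ} (hy : DifferentiableAt ℝ y s) (hy0 : y s ≠ 0)
    (hyy : HasDerivAt (fun t ↦ y t * deriv y t) (-e ^ 2) s) (hu : ContDiff ℝ 2 u) :
    HasDerivAt (fun t ↦ y t * deriv y t * (y t * deriv u t ^ 2))
      (angleDeriv y (angleDeriv y u) s ^ 2 / y s - e ^ 2 * (angleDeriv y u s ^ 2 / y s)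
        - y s ^ 3 * deriv (deriv u) s ^ 2) s := by
  have cu' : ContDiff ℝ 1 (deriv u) := hu.deriv'
  have du' : HasDerivAt (deriv u) (deriv (deriv u) s) s :=
    (cu'.differentiable (by simp) s).hasDerivAt
  refine (hyy.mul (hy.hasDerivAt.fun_mul (du'.fun_pow 2))).congr_deriv ?_
  rw [angleDeriv, (hasDerivAt_angleDeriv hy hu).deriv, angleDeriv]
  field_simp
  ring

namespace IsCriticalProfile

theorem ne_zero (hy : IsCriticalProfile e a b y) : ∀ s ∈ Icc a b, y s ≠ 0 :=
  fun s hs ↦ (hy.pos s hs).ne'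

theorem contDiffAt_one (hy : IsCriticalProfile e a b y) : ∀ s ∈ Icc a b, ContDiffAt ℝ 1 y s :=
  fun s hs ↦ (hy.contDiffAt s hs).of_le one_le_two

theorem continuousOn (hy : IsCriticalProfile e a b y) : ContinuousOn y (Icc a b) :=
  fun s hs ↦ (hy.contDiffAt s hs).continuousAt.continuousWithinAt

theorem integral_angleDeriv_angleDeriv_sq (hy : IsCriticalProfile e a b y) (hab : a ≤ b)
    (hu : ContDiff ℝ 2 u) (ha' : deriv u a = 0) (hb' : deriv u b = 0) :
    ∫ s in a..b, angleDeriv y (angleDeriv y u) s ^ 2 / y s =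
      (∫ s in a..b, y s ^ 3 * deriv (deriv u) s ^ 2)
        + e ^ 2 * ∫ s in a..b, angleDeriv y u s ^ 2 / y s := by
  have cy := hy.continuousOn
  have hy0 := hy.ne_zero
  have cD := continuousOn_angleDeriv cy (hu.of_le one_le_two)
  have cDD := continuousOn_angleDeriv_angleDeriv hy.contDiffAt_one hu
  have hderiv : ∀ s ∈ uIcc a b, HasDerivAt (fun t ↦ y t * deriv y t * (y t * deriv u t ^ 2))
      (angleDeriv y (angleDeriv y u) s ^ 2 / y s - e ^ 2 * (angleDeriv y u s ^ 2 / y s)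
        - y s ^ 3 * deriv (deriv u) s ^ 2) s := fun s hs ↦ by
    rw [uIcc_of_le hab] at hs
    exact hasDerivAt_mul_deriv_mul_sq ((hy.contDiffAt s hs).differentiableAt (by simp)) (hy0 s hs)
      (hy.hasDerivAt_mul_deriv s hs) hu
  have hint := integral_eq_sub_of_hasDerivAt hderiv
    (ContinuousOn.intervalIntegrable_of_Icc hab (by fun_prop (disch := assumption)))
  rw [integral_sub, integral_sub, integral_const_mul, ha', hb'] at hint
  · linear_combination hint
  all_goals exact ContinuousOn.intervalIntegrable_of_Icc hab (by fun_prop (disch := assumption))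

theorem integral_energy_eq_zero (hy : IsCriticalProfile e a b y) (hab : a ≤ b)
    (hu : ContDiff ℝ 4 u)
    (hode : ∀ s ∈ Ioo a b, deriv (deriv fun t ↦ y t ^ 3 * deriv (deriv u) t) s
      + μ * deriv (fun t ↦ y t * deriv u t) s + e ^ 2 / y s * u s = 0)
    (ha : u a = 0) (hb : u b = 0) (ha' : deriv u a = 0) (hb' : deriv u b = 0) :
    (∫ s in a..b, y s ^ 3 * deriv (deriv u) s ^ 2) - μ * (∫ s in a..b, angleDeriv y u s ^ 2 / y s)
      + e ^ 2 * ∫ s in a..b, u s ^ 2 / y s = 0 := by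
  have cy := hy.continuousOn
  have hy0 := hy.ne_zero
  have hu2 : ContDiff ℝ 2 u := hu.of_le (by norm_num)
  have cu : Continuous u := hu.continuous
  have cD := continuousOn_angleDeriv cy (hu2.of_le one_le_two)
  have henergy := integral_eq_zero_of_clamped_solution hab (q := fun s ↦ μ * y s)
    (r := fun s ↦ e ^ 2 / y s) (fun s hs ↦ (hy.contDiffAt s hs).pow 3)
    (fun s hs ↦ ((hy.contDiffAt s hs).differentiableAt (by simp)).const_mul μ)
    (continuousOn_const.div cy hy0) hu
    (by simpa only [mul_assoc, deriv_const_mul_field] using hode) ha hb ha' hb'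
  rw [← henergy, ← integral_const_mul, ← integral_const_mul, ← integral_sub, ← integral_add]
  · refine integral_congr fun s hs ↦ ?_
    have hys := hy0 s (by rwa [uIcc_of_le hab] at hs)
    simp only [angleDeriv]
    field_simp
  all_goals exact ContinuousOn.intervalIntegrable_of_Icc hab (by fun_prop (disch := assumption))

theorem integral_angle_form_eq_zero (hy : IsCriticalProfile e a b y) (hab : a ≤ b)
    (hu : ContDiff ℝ 4 u)
    (hode : ∀ s ∈ Ioo a b, deriv (deriv fun t ↦ y t ^ 3 * deriv (deriv u) t) s
      + μ * deriv (fun t ↦ y t * deriv u t) s + e ^ 2 / y s * u s = 0)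
    (ha : u a = 0) (hb : u b = 0) (ha' : deriv u a = 0) (hb' : deriv u b = 0) :
    ∫ s in a..b, (angleDeriv y (angleDeriv y u) s ^ 2
      - (μ + e ^ 2) * angleDeriv y u s ^ 2 + e ^ 2 * u s ^ 2) / y s = 0 := by
  have cy := hy.continuousOn
  have hy0 := hy.ne_zero
  have hu2 : ContDiff ℝ 2 u := hu.of_le (by norm_num)
  have cu : Continuous u := hu.continuous
  have cD := continuousOn_angleDeriv cy (hu2.of_le one_le_two)
  have cDD := continuousOn_angleDeriv_angleDeriv hy.contDiffAt_one hu2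
  have henergy := hy.integral_energy_eq_zero hab hu hode ha hb ha' hb'
  simp only [add_div, sub_div, mul_div_assoc]
  rw [integral_add, integral_sub, integral_const_mul, integral_const_mul,
    hy.integral_angleDeriv_angleDeriv_sq hab hu2 ha' hb']
  · linear_combination henergy
  all_goals exact ContinuousOn.intervalIntegrable_of_Icc hab (by fun_prop (disch := assumption))

end IsCriticalProfile

end Energy

section AngleParametrization

variable {a b α β e μ : ℝ} {y u S : ℝ → ℝ}

theorem integral_comp_eq_integral_div {g : ℝ → ℝ} (hαβ : α ≤ β)
    (hy : ContinuousOn y (Icc a b)) (hy0 : ∀ s ∈ Icc a b, y s ≠ 0)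
    (hS : ∀ x ∈ Icc α β, HasDerivAt S (y (S x)) x) (hmaps : MapsTo S (Icc α β) (Icc a b))
    (hg : ContinuousOn g (Icc a b)) :
    ∫ x in α..β, g (S x) = ∫ s in S α..S β, g s / y s := by
  have cS : ContinuousOn S (Icc α β) := HasDerivAt.continuousOn hS
  rw [← uIcc_of_le hαβ] at hS hmaps cS
  rw [← intervalIntegral.integral_comp_mul_deriv' (g := fun s ↦ g s / y s) hS (hy.comp cS hmaps)
    ((hg.div hy hy0).mono hmaps.image_subset)]
  exact intervalIntegral.integral_congr fun x hx ↦ (div_mul_cancel₀ _ (hy0 _ (hmaps hx))).symm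

theorem hasDerivAt_comp_angle {w : ℝ → ℝ} {x : ℝ} (hS : HasDerivAt S (y (S x)) x)
    (hw : DifferentiableAt ℝ w (S x)) : HasDerivAt (fun x ↦ w (S x)) (angleDeriv y w (S x)) x :=
  (hw.hasDerivAt.comp x hS).congr_deriv (mul_comm _ _)

theorem IsCriticalProfile.eq_zero_of_clamped_solution (hy : IsCriticalProfile e a b y)
    (hab : a ≤ b) (he : 0 < e) (he1 : e ≤ 1) (hαβ : α < β) (hlen : β - α ≤ 2 * π)
    (hS : ∀ x ∈ Icc α β, HasDerivAt S (y (S x)) x) (hmaps : MapsTo S (Icc α β) (Icc a b))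
    (hSα : S α = a) (hSβ : S β = b) (hμ : μ ≤ 1) (hu : ContDiff ℝ 4 u)
    (hode : ∀ s ∈ Ioo a b, deriv (deriv fun t ↦ y t ^ 3 * deriv (deriv u) t) s
      + μ * deriv (fun t ↦ y t * deriv u t) s + e ^ 2 / y s * u s = 0)
    (ha : u a = 0) (hb : u b = 0) (ha' : deriv u a = 0) (hb' : deriv u b = 0) :
    ∀ s ∈ Icc a b, u s = 0 := by
  have hu2 : ContDiff ℝ 2 u := hu.of_le (by norm_num)
  have cu : Continuous u := hu.continuous
  have cS : ContinuousOn S (Icc α β) := HasDerivAt.continuousOn hS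
  have cD := continuousOn_angleDeriv hy.continuousOn (hu2.of_le one_le_two)
  have cDD := continuousOn_angleDeriv_angleDeriv hy.contDiffAt_one hu2
  have hform := integral_comp_eq_integral_div hαβ.le hy.continuousOn hy.ne_zero hS hmaps
    (g := fun s ↦ angleDeriv y (angleDeriv y u) s ^ 2
      - (μ + e ^ 2) * angleDeriv y u s ^ 2 + e ^ 2 * u s ^ 2) (by fun_prop)
  rw [hSα, hSβ, hy.integral_angle_form_eq_zero hab hu hode ha hb ha' hb'] at hform
  have hzero : ∀ x ∈ Icc α β, u (S x) = 0 :=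
    eq_zero_of_integral_clamped_form_eq_zero hαβ hlen
      (fun x hx ↦ hasDerivAt_comp_angle (hS x hx) (hu.differentiable (by simp) _))
      (fun x hx ↦ hasDerivAt_comp_angle (hS x hx) (hasDerivAt_angleDeriv
        ((hy.contDiffAt _ (hmaps hx)).differentiableAt (by simp)) hu2).differentiableAt)
      (cDD.comp cS hmaps) he he1 hμ (by rw [hSα, ha]) (by rw [hSβ, hb])
      (by rw [hSα, angleDeriv, ha', mul_zero]) (by rw [hSβ, angleDeriv, hb', mul_zero]) hform
  intro s hs
  obtain ⟨x, hx, rfl⟩ := intermediate_value_Icc hαβ.le cS (by rwa [hSα, hSβ])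
  exact hzero x hx

end AngleParametrization

section Semiellipse

/-- The upper half of the ellipse centred at `(c, 0)` with semi-axes `k` and `e * k`, as a graph. -/
noncomputable def semiellipse (c k e s : ℝ) : ℝ := e * √(k ^ 2 - (s - c) ^ 2)

variable {c k e l s : ℝ}

theorem radicand_pos_of_mem_Icc (hlk : l < k) (hs : s ∈ Icc (c - l) (c + l)) :
    0 < k ^ 2 - (s - c) ^ 2 := by
  nlinarith [hs.1, hs.2]

theorem semiellipse_mul_deriv (h : 0 < k ^ 2 - (s - c) ^ 2) :
    semiellipse c k e s * deriv (semiellipse c k e) s = -e ^ 2 * (s - c) := by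
  have hradicand : HasDerivAt (fun t ↦ k ^ 2 - (t - c) ^ 2) (-(2 * (s - c))) s := by
    simpa using (((hasDerivAt_id s).sub_const c).fun_pow 2).const_sub (k ^ 2)
  have hderiv : HasDerivAt (semiellipse c k e) _ s := (hradicand.sqrt h.ne').const_mul e
  have hsqrt : √(k ^ 2 - (s - c) ^ 2) ≠ 0 := (sqrt_pos.2 h).ne'
  rw [hderiv.deriv, semiellipse]
  field_simp

theorem isCriticalProfile_semiellipse (he : 0 < e) (hlk : l < k) :
    IsCriticalProfile e (c - l) (c + l) (semiellipse c k e) where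
  contDiffAt s hs := contDiffAt_const.mul
    (ContDiffAt.sqrt (by fun_prop) (radicand_pos_of_mem_Icc hlk hs).ne')
  pos s hs := mul_pos he (sqrt_pos.2 (radicand_pos_of_mem_Icc hlk hs))
  hasDerivAt_mul_deriv s hs := by
    have hev : ∀ᶠ t in nhds s, 0 < k ^ 2 - (t - c) ^ 2 :=
      ContinuousAt.eventually_lt (by fun_prop) (by fun_prop) (radicand_pos_of_mem_Icc hlk hs)
    have hlin : HasDerivAt (fun t ↦ -e ^ 2 * (t - c)) (-e ^ 2) s := by
      simpa using ((hasDerivAt_id s).sub_const c).const_mul (-e ^ 2)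
    exact hlin.congr_of_eventuallyEq (hev.mono fun t ↦ semiellipse_mul_deriv)

theorem semiellipse_sin {φ : ℝ} (hk : 0 ≤ k) (hφ : φ ∈ Icc (-(π / 2)) (π / 2)) :
    semiellipse c k e (c + k * sin φ) = e * (k * cos φ) := by
  have hcos : 0 ≤ k * cos φ := mul_nonneg hk (cos_nonneg_of_mem_Icc hφ)
  rw [semiellipse, ← sqrt_sq hcos]
  congr 2
  linear_combination (-k ^ 2) * sin_sq_add_cos_sq φ

theorem hasDerivAt_semiellipse_angle {x : ℝ} (hk : 0 ≤ k)
    (hx : e * x ∈ Icc (-(π / 2)) (π / 2)) :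
    HasDerivAt (fun x ↦ c + k * sin (e * x)) (semiellipse c k e (c + k * sin (e * x))) x := by
  rw [semiellipse_sin hk hx]
  have hlin : HasDerivAt (fun x ↦ e * x) e x := by simpa using (hasDerivAt_id x).const_mul e
  exact ((hlin.sin.const_mul k).const_add c).congr_deriv (by ring)

theorem mapsTo_semiellipse_angle {β : ℝ} (hk : 0 ≤ k) (he : 0 ≤ e) (hβ : e * β ≤ π / 2) :
    MapsTo (fun x ↦ c + k * sin (e * x)) (Icc (-β) β)
      (Icc (c - k * sin (e * β)) (c + k * sin (e * β))) := by
  intro x hx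
  have hlower : e * -β ≤ e * x := mul_le_mul_of_nonneg_left hx.1 he
  have hupper : e * x ≤ e * β := mul_le_mul_of_nonneg_left hx.2 he
  rw [mul_neg] at hlower
  have hsin_lower : -sin (e * β) ≤ sin (e * x) :=
    sin_neg (e * β) ▸ sin_le_sin_of_le_of_le_pi_div_two (by linarith) (by linarith) hlower
  have hsin_upper : sin (e * x) ≤ sin (e * β) :=
    sin_le_sin_of_le_of_le_pi_div_two (by linarith) hβ hupper
  constructor <;> nlinarith

theorem eq_zero_of_semiellipse_clamped_solution {μ : ℝ} {u : ℝ → ℝ} (he : 0 < e) (he1 : e ≤ 1)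
    (hl : 0 < l) (hlk : l < k) (hangle : arcsin (l / k) ≤ e * π) (hμ : μ ≤ 1) (hu : ContDiff ℝ 4 u)
    (hode : ∀ s ∈ Ioo (c - l) (c + l),
      deriv (deriv fun t ↦ semiellipse c k e t ^ 3 * deriv (deriv u) t) s
        + μ * deriv (fun t ↦ semiellipse c k e t * deriv u t) s
        + e ^ 2 / semiellipse c k e s * u s = 0)
    (ha : u (c - l) = 0) (hb : u (c + l) = 0)
    (ha' : deriv u (c - l) = 0) (hb' : deriv u (c + l) = 0) :
    ∀ s ∈ Icc (c - l) (c + l), u s = 0 := by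
  have hk : 0 < k := hl.trans hlk
  set β : ℝ := arcsin (l / k) / e
  have heβ : e * β = arcsin (l / k) := mul_div_cancel₀ _ he.ne'
  have hβpos : 0 < β := div_pos (arcsin_pos.2 (div_pos hl hk)) he
  have hβπ : β ≤ π := (div_le_iff₀' he).2 hangle
  have hksin : k * sin (e * β) = l := by
    have hlk1 : l / k ≤ 1 := (div_le_one hk).2 hlk.le
    rw [heβ, sin_arcsin (by linarith [div_pos hl hk]) hlk1, mul_div_cancel₀ _ hk.ne']
  have heβ2 : e * β ≤ π / 2 := heβ.trans_le (arcsin_le_pi_div_two _)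
  have hangle_mem : ∀ x ∈ Icc (-β) β, e * x ∈ Icc (-(π / 2)) (π / 2) := fun x hx ↦
    ⟨by nlinarith [hx.1], by nlinarith [hx.2]⟩
  refine (isCriticalProfile_semiellipse he hlk).eq_zero_of_clamped_solution (by linarith) he he1
    (neg_lt_self hβpos) (by linarith)
    (fun x hx ↦ hasDerivAt_semiellipse_angle hk.le (hangle_mem x hx)) ?_ ?_ ?_
    hμ hu hode ha hb ha' hb'
  · simpa only [hksin] using mapsTo_semiellipse_angle (c := c) hk.le he.le heβ2
  · rw [mul_neg, sin_neg, mul_neg, hksin, sub_eq_add_neg]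
  · rw [hksin]

end Semiellipse

section Sine

variable {x : ℝ}

theorem arcsin_sin_le (hx : 0 ≤ x) : arcsin (sin x) ≤ x := by
  obtain h | h := le_total x (π / 2)
  · exact (arcsin_sin (by linarith [pi_pos]) h).le
  · exact (arcsin_le_pi_div_two _).trans h

theorem sin_lt_one_of_ne_pi_div_two (hx : x ∈ Icc 0 π) (hne : x ≠ π / 2) : sin x < 1 := by
  refine (sin_le_one x).lt_of_ne fun h ↦ hne (injOn_cos hx ⟨by positivity, by linarith [pi_pos]⟩ ?_)
  rw [cos_pi_div_two, cos_eq_zero_iff_sin_eq]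
  exact .inl h

end Sine

section CriticalData

variable {x0 L : ℝ}

theorem inv_Hc (s : ℝ) : (Hc x0 L s)⁻¹ = semiellipse L (kap x0 L) √(x0 / (L + x0)) s := by
  rw [Hc, sig, semiellipse, mul_assoc, ← div_div, div_self pi_ne_zero, one_div, inv_inv]

theorem two_sub_div_eq_two_mul_sqrt_sq (hx0 : 0 ≤ x0) (hL : 0 < L) :
    2 - 2 * L / (L + x0) = 2 * √(x0 / (L + x0)) ^ 2 := by
  rw [sq_sqrt (by positivity)]
  field_simp
  ring

theorem Lop_eq_two_mul_semiellipse_operator (hx0 : 0 ≤ x0) (hL : 0 < L) (μ : ℝ) (u : ℝ → ℝ)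
    (s : ℝ) :
    Lop x0 L μ u s =
      2 * (deriv (deriv fun t ↦
          semiellipse L (kap x0 L) √(x0 / (L + x0)) t ^ 3 * deriv (deriv u) t) s
        + μ * deriv (fun t ↦ semiellipse L (kap x0 L) √(x0 / (L + x0)) t * deriv u t) s
        + √(x0 / (L + x0)) ^ 2 / semiellipse L (kap x0 L) √(x0 / (L + x0)) s * u s) := by
  have hcube (t : ℝ) : 2 / Hc x0 L t ^ 3 * deriv (deriv u) t =
      2 * ((Hc x0 L t)⁻¹ ^ 3 * deriv (deriv u) t) := by ring
  have hinv (t : ℝ) : 2 / Hc x0 L t * deriv u t = 2 * ((Hc x0 L t)⁻¹ * deriv u t) := by ring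
  simp only [Lop, two_sub_div_eq_two_mul_sqrt_sq hx0 hL, hcube, hinv, deriv_const_mul_field,
    deriv_const_mul_field', ← inv_Hc, div_inv_eq_mul]
  ring

theorem sqrt_div_add_lt_one (hx0 : 0 < x0) (hL : 0 < L) : √(x0 / (L + x0)) < 1 := by
  rw [sqrt_lt' one_pos, one_pow, div_lt_one (by positivity)]
  linarith

theorem sqrt_div_add_ne_half (hx0 : 0 < x0) (hL : 0 < L) (hne : L ≠ 3 * x0) :
    √(x0 / (L + x0)) ≠ 1 / 2 := by
  intro h
  have hsq := sq_sqrt (show 0 ≤ x0 / (L + x0) by positivity)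
  rw [h] at hsq
  field_simp at hsq
  exact hne (by linarith)

theorem sig_mem_Ioo (hx0 : 0 < x0) (hL : 0 < L) : sig x0 L ∈ Ioo 0 π :=
  ⟨mul_pos pi_pos (by positivity), mul_lt_of_lt_one_right pi_pos (sqrt_div_add_lt_one hx0 hL)⟩

theorem lt_kap (hx0 : 0 < x0) (hL : 0 < L) (hne : L ≠ 3 * x0) : L < kap x0 L := by
  have hσ := sig_mem_Ioo hx0 hL
  have hσ_ne : sig x0 L ≠ π / 2 := fun h ↦ sqrt_div_add_ne_half hx0 hL hne <|
    mul_left_cancel₀ pi_ne_zero (h.trans (div_eq_mul_one_div π 2))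
  exact (lt_div_iff₀ (sin_pos_of_mem_Ioo hσ)).2 <|
    mul_lt_of_lt_one_right hL (sin_lt_one_of_ne_pi_div_two (Ioo_subset_Icc_self hσ) hσ_ne)

theorem arcsin_div_kap_le (hx0 : 0 < x0) (hL : 0 < L) : arcsin (L / kap x0 L) ≤ sig x0 L := by
  rw [kap, div_div_cancel₀ hL.ne']
  exact arcsin_sin_le (sig_mem_Ioo hx0 hL).1.le

end CriticalData

theorem statement17_general (x0 L μ : ℝ) (hx0 : 0 < x0) (hL : L ≠ 3 * x0)
    (u : ℝ → ℝ) (hu : ContDiff ℝ 4 u)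
    (hne : ∃ s ∈ Icc 0 (2 * L), u s ≠ 0)
    (hode : ∀ s ∈ Ioo 0 (2 * L), Lop x0 L μ u s = 0)
    (h0 : u 0 = 0) (h2 : u (2 * L) = 0)
    (hd0 : deriv u 0 = 0) (hd2 : deriv u (2 * L) = 0) :
    1 < μ := by
  obtain ⟨s, hs, hus⟩ := hne
  have hLpos : 0 < L := by
    have hs0 : 0 < s := hs.1.lt_of_ne fun h ↦ hus (h ▸ h0)
    linarith [hs.2]
  by_contra! hμ
  have hsemiellipse_ode (t) (ht : t ∈ Ioo 0 (2 * L)) :=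
    (mul_eq_zero_iff_left two_ne_zero).1
      ((Lop_eq_two_mul_semiellipse_operator hx0.le hLpos μ u t).symm.trans (hode t ht))
  have hrigidity := eq_zero_of_semiellipse_clamped_solution (c := L) (by positivity)
    (sqrt_div_add_lt_one hx0 hLpos).le hLpos (lt_kap hx0 hLpos hL)
    (mul_comm π _ ▸ arcsin_div_kap_le hx0 hLpos) hμ hu
  simp only [sub_self, ← two_mul] at hrigidity
  exact hus (hrigidity hsemiellipse_ode h0 h2 hd0 hd2 s hs)

/-- any nontrivial `C⁴` solution of the stability boundary value problem with
`μ > 0` forces `μ > 1`. -/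
theorem statement17 (x0 L μ : ℝ) (hx0 : 0 < x0) (hL : 3 * x0 < L) (hμ : 0 < μ)
    (u : ℝ → ℝ) (hu : ContDiff ℝ 4 u)
    (hne : ∃ s ∈ Set.Icc (0:ℝ) (2 * L), u s ≠ 0)
    (hode : ∀ s ∈ Set.Ioo (0:ℝ) (2 * L), Lop x0 L μ u s = 0)
    (h0 : u 0 = 0) (h2 : u (2 * L) = 0)
    (hd0 : deriv u 0 = 0) (hd2 : deriv u (2 * L) = 0) :
    1 < μ :=
  statement17_general x0 L μ hx0 hL.ne' u hu hne hode h0 h2 hd0 hd2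
end
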